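/- Let H be a real Hilbert space, let Vf ⊆ (0,∞] be a nonempty set of forbidden velocities, and let λ ∈ [0,∞] \ Vf. Then for every s ∈ {−1,1}, every unitary operator J on H, every unit vector n ∈ H and every a ∈ M(H), the map W_{λ;Vf}[s,n,J;a], which sends ω = (t,(x,c)) ∈ M(H_Vf) to (T(W_{λ,c}[s,n,J;a]ω*), (X-component of W_{λ,c}[s,n,J;a]ω*, c)) where ω* = (t,x), is a bijection of M(H_Vf) = ℝ × (H × Vf) onto itself. -/

import Mathlib

open scoped InnerProductSpace

/-- Generalized Lorentz transform `W_{λ,c}[s,n,J]` on `M(H) = ℝ × H` (case `λ < ∞`, `c < ∞`). -/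
noncomputable def Wfin {H : Type*} [NormedAddCommGroup H] [InnerProductSpace ℝ H]
    (lam c s : ℝ) (n : H) (J : H ≃ₗᵢ[ℝ] H) (w : ℝ × H) : ℝ × H :=
  ((s * w.1 - lam / c ^ 2 * ⟪n, w.2⟫_ℝ) / Real.sqrt |1 - lam ^ 2 / c ^ 2|,
    J (((lam * w.1 - s * ⟪n, w.2⟫_ℝ) / Real.sqrt |1 - lam ^ 2 / c ^ 2|) • n
      + (w.2 - ⟪n, w.2⟫_ℝ • n)))

/-- Generalized Lorentz transform `W_{λ,∞}[s,n,J]` on `M(H) = ℝ × H` (case `c = ∞`). -/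
noncomputable def Wgal {H : Type*} [NormedAddCommGroup H] [InnerProductSpace ℝ H]
    (lam s : ℝ) (n : H) (J : H ≃ₗᵢ[ℝ] H) (w : ℝ × H) : ℝ × H :=
  (s * w.1, J ((lam * w.1 - s * ⟪n, w.2⟫_ℝ) • n + (w.2 - ⟪n, w.2⟫_ℝ • n)))

/-- Generalized Lorentz transform `W_{∞,c}[s,n,J]` on `M(H) = ℝ × H` (case `λ = ∞`). -/
noncomputable def Wtach {H : Type*} [NormedAddCommGroup H] [InnerProductSpace ℝ H]
    (c s : ℝ) (n : H) (J : H ≃ₗᵢ[ℝ] H) (w : ℝ × H) : ℝ × H :=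
  (-⟪n, w.2⟫_ℝ / c, J ((c * w.1) • n + (w.2 - ⟪n, w.2⟫_ℝ • n)))

open scoped ENNReal

/-- Generalized Lorentz transform `W_{λ,c}[s,n,J]` with extended-real parameters
`λ, c ∈ [0,∞]` (only the combinations appearing in the paper are meaningful). -/
noncomputable def Wgen {H : Type*} [NormedAddCommGroup H] [InnerProductSpace ℝ H]
    (lam c : ℝ≥0∞) (s : ℝ) (n : H) (J : H ≃ₗᵢ[ℝ] H) (w : ℝ × H) : ℝ × H :=
  if c = ⊤ then Wgal lam.toReal s n J w
  else if lam = ⊤ then Wtach c.toReal s n J w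
  else Wfin lam.toReal c.toReal s n J w

/-- The transform `W_{λ;Vf}[s,n,J;a]` on the Minkowski space with forbidden velocities,
`M(H_Vf) = ℝ × (H × Vf)`: it sends `ω = (t,(x,c))` to the point whose `M(H)`-part is
`W_{λ,c}[s,n,J;a] ω*` (with `ω* = (t,x)`) and whose velocity component is again `c`. -/
noncomputable def WVf {H : Type*} [NormedAddCommGroup H] [InnerProductSpace ℝ H]
    (Vf : Set ℝ≥0∞) (lam : ℝ≥0∞) (s : ℝ) (n : H) (J : H ≃ₗᵢ[ℝ] H) (a : ℝ × H)
    (ω : ℝ × H × ↥Vf) : ℝ × H × ↥Vf :=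
  ((Wgen lam (ω.2.2 : ℝ≥0∞) s n J ((ω.1, ω.2.1) + a)).1,
    (Wgen lam (ω.2.2 : ℝ≥0∞) s n J ((ω.1, ω.2.1) + a)).2, ω.2.2)

/-!
In every case `W_{λ,c}[s,n,J]` is `id × J` after a linear map that acts on the plane spanned by `e₀`
and `n` by a `2 × 2` matrix and fixes the orthogonal complement of that plane. Such linear maps
depend multiplicatively on the matrix, so a nonzero determinant suffices for bijectivity; for
`λ, c < ∞` the determinant is `(λ²/c² - 1) / |1 - λ²/c²|`.
-/

section PlaneExtend

variable {R M : Type*} [CommRing R] [AddCommGroup M] [Module R M]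

/-- The endomorphism of `R × M` extending the action of the matrix `A` on the plane spanned by
`(1, 0)` and `(0, n)` by the identity on `{0} × ker φ`. This reading presupposes `φ n = 1`, so that
`x ↦ φ x • n` is the projection of `M` onto `R ∙ n` along `ker φ`. -/
def planeExtend (φ : Module.Dual R M) (n : M) (A : Matrix (Fin 2) (Fin 2) R) :
    Module.End R (R × M) where
  toFun w := (A 0 0 * w.1 + A 0 1 * φ w.2, (A 1 0 * w.1 + A 1 1 * φ w.2) • n + (w.2 - φ w.2 • n))
  map_add' v w := by
    ext
    · simp only [Prod.fst_add, Prod.snd_add, map_add]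
      ring
    · simp only [Prod.fst_add, Prod.snd_add, map_add]
      module
  map_smul' r w := by
    ext
    · simp only [Prod.smul_fst, Prod.smul_snd, map_smul, smul_eq_mul, RingHom.id_apply]
      ring
    · simp only [Prod.smul_fst, Prod.smul_snd, map_smul, smul_eq_mul, RingHom.id_apply]
      module

variable (φ : Module.Dual R M) (n : M)

theorem planeExtend_apply (A : Matrix (Fin 2) (Fin 2) R) (w : R × M) :
    planeExtend φ n A w =
      (A 0 0 * w.1 + A 0 1 * φ w.2, (A 1 0 * w.1 + A 1 1 * φ w.2) • n + (w.2 - φ w.2 • n)) :=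
  rfl

theorem planeExtend_one : planeExtend φ n 1 = 1 :=
  LinearMap.ext fun w => by simp [planeExtend_apply]

variable {φ n}

theorem planeExtend_mul (h : φ n = 1) (A B : Matrix (Fin 2) (Fin 2) R) :
    planeExtend φ n (A * B) = planeExtend φ n A * planeExtend φ n B := by
  refine LinearMap.ext fun w => ?_
  have hφ : φ (planeExtend φ n B w).2 = B 1 0 * w.1 + B 1 1 * φ w.2 := by
    simp [planeExtend_apply, h]
  rw [Module.End.mul_apply, planeExtend_apply φ n A, hφ]
  simp only [planeExtend_apply, Matrix.mul_apply, Fin.sum_univ_two]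
  ext
  · ring
  · module

theorem planeExtend_bijective (h : φ n = 1) {A : Matrix (Fin 2) (Fin 2) R} (hA : IsUnit A.det) :
    Function.Bijective (planeExtend φ n A) := by
  let ρ : Matrix (Fin 2) (Fin 2) R →* Module.End R (R × M) :=
    ⟨⟨planeExtend φ n, planeExtend_one φ n⟩, planeExtend_mul h⟩
  exact (Module.End.isUnit_iff _).1 (((Matrix.isUnit_iff_isUnit_det A).2 hA).map ρ)

end PlaneExtend

section LorentzTransform

variable {H : Type*} [NormedAddCommGroup H] [InnerProductSpace ℝ H] {n : H} (J : H ≃ₗᵢ[ℝ] H)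

theorem Wfin_eq_comp_planeExtend (lam c s : ℝ) (n : H) :
    Wfin lam c s n J = Prod.map id J ∘ planeExtend (innerₗ H n) n
      ((√|1 - lam ^ 2 / c ^ 2|)⁻¹ • !![s, -(lam / c ^ 2); lam, -s]) := by
  funext w
  simp only [Wfin, Function.comp_apply, planeExtend_apply, Prod.map_apply, id_eq,
    innerₗ_apply_apply, Matrix.smul_apply, Matrix.of_apply, Matrix.cons_val', Matrix.cons_val_zero,
    Matrix.cons_val_one, Matrix.cons_val_fin_one, smul_eq_mul]
  congr 1
  · ring
  · congr 3
    ring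

theorem Wgal_eq_comp_planeExtend (lam s : ℝ) (n : H) :
    Wgal lam s n J = Prod.map id J ∘ planeExtend (innerₗ H n) n !![s, 0; lam, -s] := by
  funext w
  simp [Wgal, planeExtend_apply, sub_eq_add_neg]

theorem Wtach_eq_comp_planeExtend (c s : ℝ) (n : H) :
    Wtach c s n J = Prod.map id J ∘ planeExtend (innerₗ H n) n !![0, -c⁻¹; c, 0] := by
  funext w
  simp [Wtach, planeExtend_apply, div_eq_inv_mul]

theorem prodMap_comp_planeExtend_bijective (hn : ‖n‖ = 1) {A : Matrix (Fin 2) (Fin 2) ℝ}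
    (hA : A.det ≠ 0) :
    Function.Bijective (Prod.map id J ∘ planeExtend (innerₗ H n) n A) :=
  (Function.bijective_id.prodMap J.bijective).comp
    (planeExtend_bijective (inner_self_eq_one_of_norm_eq_one hn) hA.isUnit)

theorem Wfin_bijective (hn : ‖n‖ = 1) {lam c s : ℝ} (hs : s ^ 2 = 1) (h : lam ^ 2 ≠ c ^ 2) :
    Function.Bijective (Wfin lam c s n J) := by
  have hβ : lam ^ 2 / c ^ 2 - 1 ≠ 0 := sub_ne_zero.2 (div_ne_one_of_ne h)
  have hγ : √|1 - lam ^ 2 / c ^ 2| ≠ 0 :=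
    Real.sqrt_ne_zero'.2 (abs_pos.2 (sub_ne_zero.2 (div_ne_one_of_ne h).symm))
  have hdet : (!![s, -(lam / c ^ 2); lam, -s]).det = lam ^ 2 / c ^ 2 - 1 := by
    rw [Matrix.det_fin_two_of]
    linear_combination -hs
  rw [Wfin_eq_comp_planeExtend]
  refine prodMap_comp_planeExtend_bijective J hn ?_
  rw [Matrix.det_smul, hdet]
  exact mul_ne_zero (pow_ne_zero _ (inv_ne_zero hγ)) hβ

theorem Wgal_bijective (hn : ‖n‖ = 1) (lam : ℝ) {s : ℝ} (hs : s ≠ 0) :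
    Function.Bijective (Wgal lam s n J) := by
  rw [Wgal_eq_comp_planeExtend]
  exact prodMap_comp_planeExtend_bijective J hn (by simp [hs])

theorem Wtach_bijective (hn : ‖n‖ = 1) {c : ℝ} (hc : c ≠ 0) (s : ℝ) :
    Function.Bijective (Wtach c s n J) := by
  rw [Wtach_eq_comp_planeExtend]
  exact prodMap_comp_planeExtend_bijective J hn (by simp [hc])

theorem Wgen_bijective (hn : ‖n‖ = 1) {lam c : ℝ≥0∞} (hc : c ≠ 0) (h : lam ≠ c) {s : ℝ}
    (hs : s ^ 2 = 1) : Function.Bijective (Wgen lam c s n J) := by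
  unfold Wgen
  split_ifs with hc_top hlam_top
  · exact Wgal_bijective J hn _ (by rintro rfl; norm_num at hs)
  · exact Wtach_bijective J hn (ENNReal.toReal_ne_zero.2 ⟨hc, hc_top⟩) s
  · refine Wfin_bijective J hn hs fun hsq => h ?_
    rwa [sq_eq_sq₀ ENNReal.toReal_nonneg ENNReal.toReal_nonneg,
      ENNReal.toReal_eq_toReal_iff' hlam_top hc_top] at hsq

end LorentzTransform

theorem stmt4_general {H : Type*} [NormedAddCommGroup H] [InnerProductSpace ℝ H]
    (Vf : Set ℝ≥0∞) (hVf : Vf ⊆ Set.Ioi 0) (lam : ℝ≥0∞) (hlam : lam ∉ Vf)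
    (s : ℝ) (hs : s = 1 ∨ s = -1) (J : H ≃ₗᵢ[ℝ] H) (n : H) (hn : ‖n‖ = 1) (a : ℝ × H) :
    Function.Bijective (WVf Vf lam s n J a) := by
  have hW (c : Vf) : Function.Bijective (Wgen lam c s n J) :=
    Wgen_bijective J hn (hVf c.2).ne' (ne_of_mem_of_not_mem c.2 hlam).symm (sq_eq_one_iff.2 hs)
  let e (c : Vf) : ℝ × H ≃ ℝ × H := (Equiv.addRight a).trans (Equiv.ofBijective _ (hW c))
  exact ((Equiv.prodAssoc ℝ H Vf).symm.trans
    ((Equiv.prodCongrLeft e).trans (Equiv.prodAssoc ℝ H Vf))).bijective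

/-- for a nonempty set `Vf ⊆ (0,∞]` of forbidden velocities and any
`λ ∈ [0,∞] \ Vf`, `s ∈ {−1,1}`, unitary `J`, unit vector `n` and `a ∈ M(H)`, the map
`W_{λ;Vf}[s,n,J;a]` is a bijection of `M(H_Vf) = ℝ × (H × Vf)` onto itself. -/
theorem stmt4 {H : Type*} [NormedAddCommGroup H] [InnerProductSpace ℝ H] [CompleteSpace H]
    (Vf : Set ℝ≥0∞) (hVfne : Vf.Nonempty) (hVf : Vf ⊆ Set.Ioi 0)
    (lam : ℝ≥0∞) (hlam : lam ∉ Vf) (s : ℝ) (hs : s = 1 ∨ s = -1)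
    (J : H ≃ₗᵢ[ℝ] H) (n : H) (hn : ‖n‖ = 1) (a : ℝ × H) :
    Function.Bijective (WVf Vf lam s n J a) :=
  stmt4_general Vf hVf lam hlam s hs J n hn a
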